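/- Talagrand's convex hull concentration: for X with independent coordinates in 𝒳ⁿ and measurable A ⊆ 𝒳ⁿ, P{X∈A}·E[exp(D(X,A)²/4)] ≤ 1, and consequently P{X∈A}·P{D(X,A) ≥ t} ≤ exp(-t²/4) for all t ≥ 0. -/

import Mathlib

open Set MeasureTheory
open scoped Classical

/-- Talagrand's convex distance
`D(x,A) := sup_{w ∈ 𝒲} inf_{y ∈ A} Σ_i w_i·1{x_i ≠ y_i}`, where the supremum runs over
weights `w ∈ ℝ₊ⁿ` with `Σ_i w_i² ≤ 1`. -/
noncomputable def talD {X : Type*} {n : ℕ} (x : Fin n → X) (A : Set (Fin n → X)) : ℝ :=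
  sSup {s | ∃ w : Fin n → ℝ, (∀ i, 0 ≤ w i) ∧ (∑ i, (w i) ^ 2) ≤ 1 ∧
    s = sInf {t | ∃ y ∈ A, t = ∑ i, if x i = y i then 0 else w i}}

/-!
Induction on `n`, splitting off the first coordinate. If `A_a` is the slice of `A` at `a` and `B` is
a set of points that extend to points of `A`, then `d_w(x, A)` is at most `d_w(tail x, A_{x 0})` and
at most `w 0 + d_w(tail x, B)`. Averaging the two with weights `l` and `1 - l` and applying
Cauchy-Schwarz to `w` gives
`D(x, A)² ≤ l D(tail x, A_{x 0})² + (1 - l) D(tail x, B)² + (1 - l)²`.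
After Hölder in the remaining coordinates and the induction hypothesis for `A_a` and `B`, the inner
expectation is at most `r ^ (-l) exp ((1 - l)² / 4) / ν(B)` with `r = ν(A_a) / ν(B)`. The choice
`l = max (1 + 2 log r) 0` makes this at most `(2 - r) / ν(B)`, and integrating over `a` finishes
the induction because `∫ r * ∫ (2 - r) ≤ 1`.

Two measurability problems arise. The projection of `A` need not be measurable, so `B` is the set of
points whose fibre is not null. The function `D(·, A)` need not be measurable either, so the
induction constructs measurable majorants of `exp (D² / 4)`; to integrate over `a` they must be
measurable jointly in `a`, which is why the induction runs over families of sets indexed by a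
parameter space.
-/

open Fin (cons tail)
open scoped ENNReal

section ConvexDistance

variable {ι : Type*} [Fintype ι] {X : ι → Type*}

/-- The weighted Hamming distance `d_w(x, y) = Σ_i w_i·1{x_i ≠ y_i}`, on a product of possibly
different spaces. -/
noncomputable def weightedHamming (w : ι → ℝ) (x y : ∀ i, X i) : ℝ :=
  ∑ i, if x i = y i then 0 else w i

/-- The distance `d_w(x, A)` from a point to a set, equal to `0` when `A` is empty. -/
noncomputable def weightedHammingInf (w : ι → ℝ) (x : ∀ i, X i) (A : Set (∀ i, X i)) : ℝ :=
  ⨅ y : A, weightedHamming w x y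

/-- The convex distance `D(x, A)`, on a product of possibly different spaces. -/
noncomputable def convexDist (x : ∀ i, X i) (A : Set (∀ i, X i)) : ℝ :=
  ⨆ w : {w : ι → ℝ // 0 ≤ w ∧ ∑ i, w i ^ 2 ≤ 1}, weightedHammingInf w x A

lemma weightedHammingInf_eq_sInf (w : ι → ℝ) (x : ∀ i, X i) (A : Set (∀ i, X i)) :
    weightedHammingInf w x A = sInf {t | ∃ y ∈ A, t = weightedHamming w x y} := by
  rw [weightedHammingInf, iInf]
  congr
  ext t
  simp [eq_comm]

lemma talD_eq_convexDist {n : ℕ} {Y : Type*} (x : Fin n → Y) (A : Set (Fin n → Y)) :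
    talD x A = convexDist x A := by
  simp only [talD, convexDist, iSup, weightedHammingInf_eq_sInf]
  congr
  ext s
  simp [Pi.le_def, and_assoc, eq_comm (a := s), weightedHamming]

variable {w : ι → ℝ} (x : ∀ i, X i) {A : Set (∀ i, X i)}

lemma weightedHamming_nonneg (hw : 0 ≤ w) (y : ∀ i, X i) : 0 ≤ weightedHamming w x y :=
  Finset.sum_nonneg fun i _ => ite_nonneg le_rfl (hw i)

lemma weightedHamming_le_sum (hw : 0 ≤ w) (y : ∀ i, X i) : weightedHamming w x y ≤ ∑ i, w i :=
  Finset.sum_le_sum fun i _ => ite_le_sup _ _ _ |>.trans_eq (sup_of_le_right (hw i))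

lemma weightedHammingInf_nonneg (hw : 0 ≤ w) : 0 ≤ weightedHammingInf w x A :=
  Real.iInf_nonneg fun y => weightedHamming_nonneg x hw y

lemma weightedHammingInf_le (hw : 0 ≤ w) {y : ∀ i, X i} (hy : y ∈ A) :
    weightedHammingInf w x A ≤ weightedHamming w x y :=
  ciInf_le ⟨0, forall_mem_range.2 fun y : A => weightedHamming_nonneg x hw y⟩ (⟨y, hy⟩ : A)

lemma weightedHammingInf_smul {c : ℝ} (hc : 0 ≤ c) :
    weightedHammingInf (c • w) x A = c * weightedHammingInf w x A := by
  simp only [weightedHammingInf, weightedHamming, Real.mul_iInf_of_nonneg hc, Finset.mul_sum,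
    mul_ite, mul_zero, Pi.smul_apply, smul_eq_mul]

lemma weightedHammingInf_le_card (hw : 0 ≤ w) (hw1 : ∑ i, w i ^ 2 ≤ 1) :
    weightedHammingInf w x A ≤ Fintype.card ι := by
  have hw_le_one : ∀ i, w i ≤ 1 := fun i =>
    (sq_le_one_iff₀ (hw i)).1 <|
      (Finset.single_le_sum (fun j _ => sq_nonneg (w j)) (Finset.mem_univ i)).trans hw1
  rcases A.eq_empty_or_nonempty with rfl | ⟨y, hy⟩
  · simp [weightedHammingInf]
  · calc weightedHammingInf w x A ≤ weightedHamming w x y := weightedHammingInf_le x hw hy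
      _ ≤ ∑ i, w i := weightedHamming_le_sum x hw y
      _ ≤ ∑ _i : ι, (1 : ℝ) := Finset.sum_le_sum fun i _ => hw_le_one i
      _ = Fintype.card ι := by simp

lemma weightedHammingInf_le_convexDist (hw : 0 ≤ w) (hw1 : ∑ i, w i ^ 2 ≤ 1) :
    weightedHammingInf w x A ≤ convexDist x A := by
  have hbdd : BddAbove (range fun w : {w : ι → ℝ // 0 ≤ w ∧ ∑ i, w i ^ 2 ≤ 1} =>
      weightedHammingInf w x A) := by
    refine ⟨Fintype.card ι, ?_⟩
    rintro _ ⟨v, rfl⟩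
    exact weightedHammingInf_le_card x v.2.1 v.2.2
  exact le_ciSup hbdd ⟨w, hw, hw1⟩

lemma weightedHammingInf_le_sqrt_mul_convexDist (hw : 0 ≤ w) :
    weightedHammingInf w x A ≤ √(∑ i, w i ^ 2) * convexDist x A := by
  have hsum : 0 ≤ ∑ i, w i ^ 2 := Finset.sum_nonneg fun i _ => sq_nonneg (w i)
  set c := √(∑ i, w i ^ 2) with hc
  rcases (Real.sqrt_nonneg _ : 0 ≤ c).eq_or_lt' with hc0 | hc0
  · have hw0 : w = 0 := by
      ext i
      have hsq := (Real.sqrt_eq_zero hsum).1 hc0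
      simpa using (Finset.sum_eq_zero_iff_of_nonneg fun j _ => sq_nonneg (w j)).1 hsq i
    simp [hc0, hw0, weightedHammingInf, weightedHamming, c]
  · have hunit : ∑ i, (c⁻¹ • w) i ^ 2 ≤ 1 := by
      simp only [Pi.smul_apply, smul_eq_mul, mul_pow, ← Finset.mul_sum]
      rw [inv_pow, hc, Real.sq_sqrt hsum]
      exact inv_mul_le_one
    calc weightedHammingInf w x A = c * weightedHammingInf (c⁻¹ • w) x A := by
          rw [← weightedHammingInf_smul x hc0.le, smul_inv_smul₀ hc0.ne']
      _ ≤ c * convexDist x A :=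
          mul_le_mul_of_nonneg_left (weightedHammingInf_le_convexDist x
            (smul_nonneg (inv_nonneg.2 hc0.le) hw) hunit) hc0.le

lemma convexDist_nonneg : 0 ≤ convexDist x A :=
  Real.iSup_nonneg fun w => weightedHammingInf_nonneg x w.2.1

lemma convexDist_eq_zero_of_isEmpty [IsEmpty ι] : convexDist x A = 0 := by
  simp [convexDist, weightedHammingInf, weightedHamming]

end ConvexDistance

section Slicing

variable {n : ℕ} {X : Fin (n + 1) → Type*} {w : Fin (n + 1) → ℝ} (x : ∀ i, X i)
  {A : Set (∀ i, X i)}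

lemma weightedHamming_eq_head_add_tail (y : ∀ i, X i) :
    weightedHamming w x y =
      (if x 0 = y 0 then 0 else w 0) + weightedHamming (tail w) (tail x) (tail y) :=
  Fin.sum_univ_succ _

lemma weightedHammingInf_le_slice (hw : 0 ≤ w) (hA : (cons (x 0) ⁻¹' A).Nonempty) :
    weightedHammingInf w x A ≤ weightedHammingInf (tail w) (tail x) (cons (x 0) ⁻¹' A) := by
  have : Nonempty (cons (x 0) ⁻¹' A) := hA.to_subtype
  refine le_ciInf fun y => (weightedHammingInf_le x hw y.2).trans_eq ?_
  simp [weightedHamming_eq_head_add_tail]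

lemma weightedHammingInf_le_head_add_tail (hw : 0 ≤ w) {B : Set (∀ i : Fin n, X i.succ)}
    (hB : B.Nonempty) (hBA : B ⊆ tail '' A) :
    weightedHammingInf w x A ≤ w 0 + weightedHammingInf (tail w) (tail x) B := by
  have : Nonempty B := hB.to_subtype
  rw [← sub_le_iff_le_add']
  refine le_ciInf fun ⟨_, hy⟩ => ?_
  obtain ⟨v, hv, rfl⟩ := hBA hy
  rw [sub_le_iff_le_add']
  refine (weightedHammingInf_le x hw hv).trans ?_
  rw [weightedHamming_eq_head_add_tail]
  gcongr
  split_ifs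
  exacts [hw 0, le_rfl]

lemma weightedHammingInf_le_convex_combination (hw : 0 ≤ w) {B : Set (∀ i : Fin n, X i.succ)}
    (hB : B.Nonempty) (hBA : B ⊆ tail '' A) {l : ℝ} (hl : l ∈ Icc 0 1)
    (hA : l ≠ 0 → (cons (x 0) ⁻¹' A).Nonempty) :
    weightedHammingInf w x A ≤
      l * (√(∑ i, tail w i ^ 2) * convexDist (tail x) (cons (x 0) ⁻¹' A)) +
        (1 - l) * (w 0 + √(∑ i, tail w i ^ 2) * convexDist (tail x) B) := by
  have htail : 0 ≤ tail w := fun i => hw i.succ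
  have hslice : l * weightedHammingInf w x A ≤
      l * (√(∑ i, tail w i ^ 2) * convexDist (tail x) (cons (x 0) ⁻¹' A)) := by
    rcases eq_or_ne l 0 with rfl | hl0
    · simp
    · exact mul_le_mul_of_nonneg_left ((weightedHammingInf_le_slice x hw (hA hl0)).trans
        (weightedHammingInf_le_sqrt_mul_convexDist _ htail)) hl.1
  have hproj : (1 - l) * weightedHammingInf w x A ≤
      (1 - l) * (w 0 + √(∑ i, tail w i ^ 2) * convexDist (tail x) B) :=
    mul_le_mul_of_nonneg_left ((weightedHammingInf_le_head_add_tail x hw hB hBA).trans <|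
      add_le_add_right (weightedHammingInf_le_sqrt_mul_convexDist _ htail) _) (sub_nonneg.2 hl.2)
  linarith

lemma convexDist_le_sqrt {B : Set (∀ i : Fin n, X i.succ)} (hB : B.Nonempty)
    (hBA : B ⊆ tail '' A) {l : ℝ} (hl : l ∈ Icc 0 1) (hA : l ≠ 0 → (cons (x 0) ⁻¹' A).Nonempty) :
    convexDist x A ≤ √((1 - l) ^ 2 +
      (l * convexDist (tail x) (cons (x 0) ⁻¹' A) + (1 - l) * convexDist (tail x) B) ^ 2) := by
  set D₁ := convexDist (tail x) (cons (x 0) ⁻¹' A)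
  set D₂ := convexDist (tail x) B
  refine Real.iSup_le (fun ⟨w, hw, hw1⟩ => ?_) (Real.sqrt_nonneg _)
  set c := √(∑ i, tail w i ^ 2) with hc
  have hunit : w 0 ^ 2 + c ^ 2 ≤ 1 := by
    rw [hc, Real.sq_sqrt (Finset.sum_nonneg fun i _ => sq_nonneg _)]
    exact (Fin.sum_univ_succ fun i => w i ^ 2).symm.trans_le hw1
  have cauchySchwarz : ((1 - l) * w 0 + (l * D₁ + (1 - l) * D₂) * c) ^ 2 ≤
      ((1 - l) ^ 2 + (l * D₁ + (1 - l) * D₂) ^ 2) * (w 0 ^ 2 + c ^ 2) := by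
    linarith [sq_nonneg ((1 - l) * c - (l * D₁ + (1 - l) * D₂) * w 0)]
  calc weightedHammingInf w x A ≤ l * (c * D₁) + (1 - l) * (w 0 + c * D₂) :=
        weightedHammingInf_le_convex_combination x hw hB hBA hl hA
    _ = (1 - l) * w 0 + (l * D₁ + (1 - l) * D₂) * c := by ring
    _ ≤ √((1 - l) ^ 2 + (l * D₁ + (1 - l) * D₂) ^ 2) :=
        Real.le_sqrt_of_sq_le (cauchySchwarz.trans (mul_le_of_le_one_right (by positivity) hunit))

lemma convexDist_sq_le_of_slice_of_proj {B : Set (∀ i : Fin n, X i.succ)} (hB : B.Nonempty)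
    (hBA : B ⊆ tail '' A) {l : ℝ} (hl : l ∈ Icc 0 1) (hA : l ≠ 0 → (cons (x 0) ⁻¹' A).Nonempty) :
    convexDist x A ^ 2 ≤ (1 - l) ^ 2 +
      (l * convexDist (tail x) (cons (x 0) ⁻¹' A) ^ 2 + (1 - l) * convexDist (tail x) B ^ 2) := by
  set D₁ := convexDist (tail x) (cons (x 0) ⁻¹' A)
  set D₂ := convexDist (tail x) B
  calc convexDist x A ^ 2 ≤ (1 - l) ^ 2 + (l * D₁ + (1 - l) * D₂) ^ 2 :=
        (Real.le_sqrt (convexDist_nonneg x) (by positivity)).1 (convexDist_le_sqrt x hB hBA hl hA)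
    _ ≤ (1 - l) ^ 2 + (l * D₁ ^ 2 + (1 - l) * D₂ ^ 2) := by
        gcongr
        exact (convexOn_pow 2).2 (convexDist_nonneg _) (convexDist_nonneg _) hl.1
          (sub_nonneg.2 hl.2) (add_sub_cancel _ _)

end Slicing

section ScalarInequalities

lemma exp_neg_le_quadratic {u : ℝ} (hu : 0 ≤ u) : Real.exp (-u) ≤ 1 - u + u ^ 2 / 2 := by
  rw [Real.exp_neg]
  refine (inv_anti₀ (by positivity) (Real.quadratic_le_exp_of_nonneg hu)).trans ?_
  rw [inv_le_iff_one_le_mul₀ (by positivity)]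
  linarith [sq_nonneg (u ^ 2)]

lemma exp_le_cubic {s : ℝ} (hs0 : 0 ≤ s) (hs1 : s ≤ 1) :
    Real.exp s ≤ 1 + s + s ^ 2 / 2 + 2 / 9 * s ^ 3 := by
  have h := Real.exp_bound' hs0 hs1 (n := 3) (by norm_num)
  norm_num [Finset.sum_range_succ, Nat.factorial] at h
  linarith

lemma exp_sub_sq_add_exp_neg_le_two {u : ℝ} (hu0 : 0 ≤ u) (hu1 : u ≤ 1) :
    Real.exp (u - u ^ 2) + Real.exp (-u) ≤ 2 := by
  have hs0 : 0 ≤ u - u ^ 2 := by nlinarith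
  have hs1 : u - u ^ 2 ≤ 1 := by nlinarith
  have hs3 : (u - u ^ 2) ^ 3 ≤ u ^ 3 := pow_le_pow_left₀ hs0 (by nlinarith) 3
  have hu4 : u ^ 4 ≤ u ^ 3 := pow_le_pow_of_le_one hu0 hu1 (by norm_num)
  linarith [exp_neg_le_quadratic hu0, exp_le_cubic hs0 hs1, pow_nonneg hu0 3]

/-- The exponent `l = 1 + 2 log r` minimising `exp ((1 - l) ^ 2 / 4) * r ^ (-l)`, where `r` is first
clamped to `[exp (-1/2), 1]` so that `l` lies in `[0, 1]`. -/
noncomputable def interpExponent (r : ℝ) : ℝ :=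
  1 + 2 * Real.log (max (Real.exp (-1 / 2)) (min r 1))

lemma interpExponent_mem_Icc (r : ℝ) : interpExponent r ∈ Icc (0 : ℝ) 1 := by
  set s := max (Real.exp (-1 / 2)) (min r 1) with hs
  have hlow : -1 / 2 ≤ Real.log s := by
    simpa using Real.log_le_log (Real.exp_pos _) (le_max_left (Real.exp (-1 / 2)) (min r 1))
  have hhigh : Real.log s ≤ 0 :=
    Real.log_nonpos ((Real.exp_pos _).le.trans (le_max_left _ _))
      (max_le (Real.exp_le_one_iff.2 (by norm_num)) (min_le_right _ _))
  constructor <;> simp only [interpExponent, ← hs] <;> linarith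

lemma interpExponent_of_le {r : ℝ} (hr : r ≤ Real.exp (-1 / 2)) : interpExponent r = 0 := by
  rw [interpExponent, max_eq_left ((min_le_left _ _).trans hr), Real.log_exp]
  norm_num

lemma interpExponent_of_ge {r : ℝ} (hr : Real.exp (-1 / 2) ≤ r) (hr1 : r ≤ 1) :
    interpExponent r = 1 + 2 * Real.log r := by
  rw [interpExponent, min_eq_left hr1, max_eq_right hr]

lemma measurable_interpExponent : Measurable interpExponent := by
  unfold interpExponent
  fun_prop

lemma exp_interpExponent_le {r : ℝ} (hr1 : r ≤ 1) :
    Real.exp ((1 - interpExponent r) ^ 2 / 4) ≤ (2 - r) * r ^ interpExponent r := by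
  rcases le_total r (Real.exp (-1 / 2)) with hr | hr
  · have h := exp_sub_sq_add_exp_neg_le_two (u := 1 / 2) (by norm_num) (by norm_num)
    rw [interpExponent_of_le hr, Real.rpow_zero]
    norm_num at h hr ⊢
    linarith
  · have hr0 : 0 < r := (Real.exp_pos _).trans_le hr
    have hlog : -1 / 2 ≤ Real.log r := (Real.le_log_iff_exp_le hr0).2 hr
    have h := exp_sub_sq_add_exp_neg_le_two (u := -Real.log r)
      (neg_nonneg.2 (Real.log_nonpos hr0.le hr1)) (by linarith)
    rw [neg_neg, Real.exp_log hr0, ← le_sub_iff_add_le] at h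
    rw [interpExponent_of_ge hr hr1]
    calc Real.exp ((1 - (1 + 2 * Real.log r)) ^ 2 / 4)
        = Real.exp (-Real.log r - (-Real.log r) ^ 2) *
            Real.exp (Real.log r * (1 + 2 * Real.log r)) := by
          rw [← Real.exp_add]
          ring_nf
      _ ≤ (2 - r) * Real.exp (Real.log r * (1 + 2 * Real.log r)) := by gcongr
      _ = (2 - r) * r ^ (1 + 2 * Real.log r) := by rw [Real.rpow_def_of_pos hr0]

/-- The bound `a ^ l * b ^ (1 - l) * exp ((1 - l) ^ 2 / 4)` for `exp (D² / 4)` produced by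
interpolating between a bound `a` on a slice and a bound `b` on the projection. -/
noncomputable def interpBound (l : ℝ) (a b : ℝ≥0∞) : ℝ≥0∞ :=
  a ^ l * b ^ (1 - l) * ENNReal.ofReal (Real.exp ((1 - l) ^ 2 / 4))

lemma interpBound_mono {l : ℝ} (hl : l ∈ Icc (0 : ℝ) 1) {a a' b b' : ℝ≥0∞} (ha : a ≤ a')
    (hb : b ≤ b') : interpBound l a b ≤ interpBound l a' b' := by
  have := hl.1
  have := sub_nonneg.2 hl.2
  unfold interpBound
  gcongr

lemma two_sub_coe_eq_ofReal (r : NNReal) : (2 : ℝ≥0∞) - r = ENNReal.ofReal (2 - r) := by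
  simp [ENNReal.ofReal_sub]

lemma inv_rpow_interpExponent_mul_le {r : ℝ≥0∞} (hr : r ≤ 1) :
    r⁻¹ ^ interpExponent r.toReal *
      ENNReal.ofReal (Real.exp ((1 - interpExponent r.toReal) ^ 2 / 4)) ≤ 2 - r := by
  lift r to NNReal using ne_top_of_le_ne_top ENNReal.one_ne_top hr
  have hr1 : (r : ℝ) ≤ 1 := mod_cast hr
  have hbound := exp_interpExponent_le hr1
  rw [ENNReal.coe_toReal, ENNReal.inv_rpow, mul_comm, ← div_eq_mul_inv,
    two_sub_coe_eq_ofReal]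
  rcases eq_or_ne r 0 with rfl | hr0
  · rw [NNReal.coe_zero, interpExponent_of_le (Real.exp_pos _).le] at hbound ⊢
    simpa using ENNReal.ofReal_le_ofReal hbound
  · refine ENNReal.div_le_of_le_mul ?_
    rw [← ENNReal.ofReal_coe_nnreal, ENNReal.ofReal_rpow_of_pos (NNReal.coe_pos.2 hr0.bot_lt),
      ← ENNReal.ofReal_mul (by linarith)]
    exact ENNReal.ofReal_le_ofReal hbound

lemma interpBound_le_of_mul_le_one {p q a b : ℝ≥0∞} (hpq : p ≤ q) (hq0 : q ≠ 0) (hq : q ≠ ∞)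
    (ha : p * a ≤ 1) (hb : q * b ≤ 1) :
    interpBound (interpExponent (p / q).toReal) a b ≤ q⁻¹ * (2 - p / q) := by
  set l := interpExponent (p / q).toReal
  have hl : l ∈ Icc (0 : ℝ) 1 := interpExponent_mem_Icc _
  have hpinv : p⁻¹ = (p / q)⁻¹ * q⁻¹ := by
    rw [ENNReal.inv_div (.inl hq) (.inl hq0), div_eq_mul_inv, mul_right_comm,
      ENNReal.mul_inv_cancel hq0 hq, one_mul]
  have hq_split : q⁻¹ ^ l * q⁻¹ ^ (1 - l) = q⁻¹ := by
    rw [← ENNReal.rpow_add_of_nonneg _ _ hl.1 (sub_nonneg.2 hl.2), add_sub_cancel, ENNReal.rpow_one]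
  calc interpBound l a b ≤ interpBound l p⁻¹ q⁻¹ :=
        interpBound_mono hl (ENNReal.le_inv_iff_mul_le.2 (mul_comm p a ▸ ha))
          (ENNReal.le_inv_iff_mul_le.2 (mul_comm q b ▸ hb))
    _ = q⁻¹ ^ l * q⁻¹ ^ (1 - l) *
          ((p / q)⁻¹ ^ l * ENNReal.ofReal (Real.exp ((1 - l) ^ 2 / 4))) := by
        rw [interpBound, hpinv, ENNReal.mul_rpow_of_nonneg _ _ hl.1]
        ring
    _ ≤ q⁻¹ * (2 - p / q) := by
        rw [hq_split]
        gcongr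
        exact inv_rpow_interpExponent_mul_le (ENNReal.div_le_of_le_mul (by rwa [one_mul]))

lemma mul_two_sub_le_one {r : ℝ≥0∞} (hr : r ≤ 1) : r * (2 - r) ≤ 1 := by
  lift r to NNReal using ne_top_of_le_ne_top ENNReal.one_ne_top hr
  have hreal : (r : ℝ) * (2 - r) ≤ 1 := by linarith [sq_nonneg (1 - (r : ℝ))]
  rw [two_sub_coe_eq_ofReal, ← ENNReal.ofReal_coe_nnreal, ← ENNReal.ofReal_mul r.coe_nonneg,
    ← ENNReal.ofReal_one]
  exact ENNReal.ofReal_le_ofReal hreal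

end ScalarInequalities

section ProductMeasures

variable {α β : Type*} [MeasurableSpace α] {μ : Measure α}

lemma lintegral_mul_lintegral_two_sub_le_one [IsProbabilityMeasure μ] {f : α → ℝ≥0∞}
    (hf : AEMeasurable f μ) (hf1 : ∀ᵐ a ∂μ, f a ≤ 1) :
    (∫⁻ a, f a ∂μ) * ∫⁻ a, 2 - f a ∂μ ≤ 1 := by
  have hmean : ∫⁻ a, f a ∂μ ≤ 1 := (lintegral_mono_ae hf1).trans_eq (by simp)
  have hsub : ∫⁻ a, 2 - f a ∂μ = 2 - ∫⁻ a, f a ∂μ := by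
    rw [lintegral_sub' hf (ne_top_of_le_ne_top ENNReal.one_ne_top hmean)
      (hf1.mono fun a ha => ha.trans one_le_two)]
    simp
  rw [hsub]
  exact mul_two_sub_le_one hmean

lemma measurable_interpBound {l : α → ℝ} {f g : α → ℝ≥0∞} (hl : Measurable l) (hf : Measurable f)
    (hg : Measurable g) : Measurable fun a => interpBound (l a) (f a) (g a) := by
  simp only [interpBound]
  fun_prop

lemma lintegral_interpBound_le {f g : α → ℝ≥0∞} (hf : AEMeasurable f μ) (hg : AEMeasurable g μ)
    {l : ℝ} (hl : l ∈ Icc (0 : ℝ) 1) :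
    ∫⁻ a, interpBound l (f a) (g a) ∂μ ≤ interpBound l (∫⁻ a, f a ∂μ) (∫⁻ a, g a ∂μ) := by
  simp only [interpBound]
  rw [lintegral_mul_const' _ _ ENNReal.ofReal_ne_top]
  gcongr
  exact ENNReal.lintegral_mul_norm_pow_le hf hg hl.1 (sub_nonneg.2 hl.2) (add_sub_cancel _ _)

/-- The essential projection of `S ⊆ α × β` to `β`: the points whose fibre is not `μ`-null. Unlike
the projection itself, it is measurable whenever `S` is. -/
def essProj (μ : Measure α) (S : Set (α × β)) : Set β :=
  {b | μ ((fun a => (a, b)) ⁻¹' S) ≠ 0}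

lemma essProj_subset_image_snd (S : Set (α × β)) : essProj μ S ⊆ Prod.snd '' S := fun b hb =>
  have ⟨a, ha⟩ := nonempty_of_measure_ne_zero hb
  ⟨(a, b), ha, rfl⟩

variable [MeasurableSpace β] {ν : Measure β}

lemma measurableSet_essProj [SFinite μ] {S : Set (α × β)} (hS : MeasurableSet S) :
    MeasurableSet (essProj μ S) :=
  measurable_measure_prodMk_right hS (measurableSet_singleton 0).compl

lemma ae_measure_slice_le_measure_essProj [SFinite μ] [SFinite ν] {S : Set (α × β)}
    (hS : MeasurableSet S) : ∀ᵐ a ∂μ, ν (Prod.mk a ⁻¹' S) ≤ ν (essProj μ S) := by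
  have hnull : μ.prod ν (S ∩ Prod.snd ⁻¹' (essProj μ S)ᶜ) = 0 := by
    rw [Measure.prod_apply_symm (hS.inter (measurable_snd (measurableSet_essProj hS).compl))]
    refine (lintegral_congr fun b => ?_).trans lintegral_zero
    by_cases hb : b ∈ essProj μ S
    · simp [preimage_preimage, hb]
    · exact measure_mono_null (preimage_mono inter_subset_left) (not_not.1 hb)
  filter_upwards [Measure.measure_ae_null_of_prod_null hnull] with a ha
  exact measure_mono_ae (ae_le_set.2 ha)

lemma prod_eq_zero_of_measure_essProj_eq_zero [SFinite μ] [SFinite ν] {S : Set (α × β)}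
    (hS : MeasurableSet S) (hnull : ν (essProj μ S) = 0) : μ.prod ν S = 0 := by
  rw [Measure.measure_prod_null hS]
  filter_upwards [ae_measure_slice_le_measure_essProj (ν := ν) hS] with a ha
  exact le_zero_iff.1 (hnull ▸ ha)

/-- The exponent with which the slice at `a` enters the interpolated bound. -/
noncomputable def sliceExponent (μ : Measure α) (ν : Measure β) (S : Set (α × β)) (a : α) : ℝ :=
  interpExponent (ν (Prod.mk a ⁻¹' S) / ν (essProj μ S)).toReal

lemma sliceExponent_mem_Icc (S : Set (α × β)) (a : α) : sliceExponent μ ν S a ∈ Icc (0 : ℝ) 1 :=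
  interpExponent_mem_Icc _

lemma nonempty_slice_of_sliceExponent_ne_zero {S : Set (α × β)} {a : α}
    (h : sliceExponent μ ν S a ≠ 0) : (Prod.mk a ⁻¹' S).Nonempty := by
  refine nonempty_of_measure_ne_zero (μ := ν) fun h0 => h ?_
  rw [sliceExponent, h0, ENNReal.zero_div, ENNReal.toReal_zero,
    interpExponent_of_le (Real.exp_pos _).le]

lemma prod_mul_lintegral_interpBound_le_one [IsProbabilityMeasure μ] [IsFiniteMeasure ν]
    {S : Set (α × β)} (hS : MeasurableSet S) {g₁ : α → β → ℝ≥0∞} {g₂ : β → ℝ≥0∞}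
    (hg₁ : ∀ a, AEMeasurable (g₁ a) ν) (hg₂ : AEMeasurable g₂ ν)
    (h₁ : ∀ a, ν (Prod.mk a ⁻¹' S) * ∫⁻ b, g₁ a b ∂ν ≤ 1)
    (h₂ : ν (essProj μ S) * ∫⁻ b, g₂ b ∂ν ≤ 1) (hproj : ν (essProj μ S) ≠ 0) :
    μ.prod ν S *
      ∫⁻ a, ∫⁻ b, interpBound (sliceExponent μ ν S a) (g₁ a b) (g₂ b) ∂ν ∂μ ≤ 1 := by
  set q := ν (essProj μ S)
  have hratio : Measurable fun a => ν (Prod.mk a ⁻¹' S) / q :=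
    (measurable_measure_prodMk_left (ν := ν) hS).div_const q
  have hratio_le : ∀ᵐ a ∂μ, ν (Prod.mk a ⁻¹' S) / q ≤ 1 := by
    filter_upwards [ae_measure_slice_le_measure_essProj (ν := ν) hS] with a ha
    exact ENNReal.div_le_of_le_mul (by rwa [one_mul])
  have hinner : ∀ᵐ a ∂μ, ∫⁻ b, interpBound (sliceExponent μ ν S a) (g₁ a b) (g₂ b) ∂ν ≤
      q⁻¹ * (2 - ν (Prod.mk a ⁻¹' S) / q) := by
    filter_upwards [ae_measure_slice_le_measure_essProj (ν := ν) hS] with a ha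
    exact (lintegral_interpBound_le (hg₁ a) hg₂ (sliceExponent_mem_Icc S a)).trans
      (interpBound_le_of_mul_le_one ha hproj (measure_ne_top _ _) (h₁ a) h₂)
  calc μ.prod ν S * ∫⁻ a, ∫⁻ b, interpBound (sliceExponent μ ν S a) (g₁ a b) (g₂ b) ∂ν ∂μ
      ≤ μ.prod ν S * ∫⁻ a, q⁻¹ * (2 - ν (Prod.mk a ⁻¹' S) / q) ∂μ := by
        gcongr _ * ?_
        exact lintegral_mono_ae hinner
    _ = (∫⁻ a, ν (Prod.mk a ⁻¹' S) / q ∂μ) * ∫⁻ a, 2 - ν (Prod.mk a ⁻¹' S) / q ∂μ := by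
        have hq_inv : q⁻¹ ≠ ∞ := ENNReal.inv_ne_top.2 hproj
        simp only [div_eq_mul_inv]
        rw [Measure.prod_apply hS, lintegral_const_mul' _ _ hq_inv, lintegral_mul_const' _ _ hq_inv,
          mul_assoc]
    _ ≤ 1 := lintegral_mul_lintegral_two_sub_le_one hratio.aemeasurable hratio_le

end ProductMeasures

section Majorants

universe u

/-- The integrand `exp (D(x, A)² / 4)`, as an extended nonnegative real. -/
noncomputable def expSqConvexDist {ι : Type*} [Fintype ι] {X : ι → Type*} (x : ∀ i, X i)
    (A : Set (∀ i, X i)) : ℝ≥0∞ :=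
  ENNReal.ofReal (Real.exp (convexDist x A ^ 2 / 4))

/-- `g` is a jointly measurable majorant of `exp (D(x, A_z)² / 4)` for the family of sets
`A_z = {y | (z, y) ∈ A}`, and satisfies Talagrand's inequality for each of them. The function
`x ↦ D(x, A_z)` itself need not be measurable. -/
structure IsExpMajorant {Z ι : Type*} [MeasurableSpace Z] [Fintype ι] {X : ι → Type*}
    [∀ i, MeasurableSpace (X i)] (ν : Measure (∀ i, X i)) (A : Set (Z × ∀ i, X i))
    (g : Z × (∀ i, X i) → ℝ≥0∞) : Prop where
  measurable : Measurable g
  le : ∀ z x, expSqConvexDist x (Prod.mk z ⁻¹' A) ≤ g (z, x)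
  measure_mul_lintegral_le_one : ∀ z, ν (Prod.mk z ⁻¹' A) * ∫⁻ x, g (z, x) ∂ν ≤ 1

lemma isExpMajorant_one {Z ι : Type*} [MeasurableSpace Z] [Fintype ι] [IsEmpty ι] {X : ι → Type*}
    [∀ i, MeasurableSpace (X i)] (ν : Measure (∀ i, X i)) [IsProbabilityMeasure ν]
    (A : Set (Z × ∀ i, X i)) : IsExpMajorant ν A 1 where
  measurable := measurable_one
  le z x := by simp [expSqConvexDist, convexDist_eq_zero_of_isEmpty]
  measure_mul_lintegral_le_one z := by simpa using prob_le_one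

variable {n : ℕ} {X : Fin (n + 1) → Type*} {Z : Type*}

/-- The section of `A` at `z`, with the first coordinate split off. -/
def splitHead (A : Set (Z × ∀ i, X i)) (z : Z) : Set (X 0 × ∀ i : Fin n, X i.succ) :=
  {p | (z, cons p.1 p.2) ∈ A}

/-- The sections of `A` with the first coordinate fixed, as a family indexed by `Z × X 0`. -/
def headSlices (A : Set (Z × ∀ i, X i)) : Set ((Z × X 0) × ∀ i : Fin n, X i.succ) :=
  {p | (p.1.2, p.2) ∈ splitHead A p.1.1}

lemma expSqConvexDist_le_interpBound (x : ∀ i, X i) {A : Set (∀ i, X i)}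
    {B : Set (∀ i : Fin n, X i.succ)} (hB : B.Nonempty) (hBA : B ⊆ tail '' A) {l : ℝ}
    (hl : l ∈ Icc 0 1) (hA : l ≠ 0 → (cons (x 0) ⁻¹' A).Nonempty) :
    expSqConvexDist x A ≤ interpBound l (expSqConvexDist (tail x) (cons (x 0) ⁻¹' A))
      (expSqConvexDist (tail x) B) := by
  have h := convexDist_sq_le_of_slice_of_proj x hB hBA hl hA
  simp only [expSqConvexDist, interpBound]
  rw [ENNReal.ofReal_rpow_of_pos (Real.exp_pos _), ENNReal.ofReal_rpow_of_pos (Real.exp_pos _),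
    ← ENNReal.ofReal_mul (by positivity), ← ENNReal.ofReal_mul (by positivity),
    ← Real.exp_mul, ← Real.exp_mul, ← Real.exp_add, ← Real.exp_add]
  refine ENNReal.ofReal_le_ofReal (Real.exp_le_exp.2 ?_)
  linarith

variable [∀ i, MeasurableSpace (X i)]

/-- The sections of the essential projections along the first coordinate, as a family indexed by
`Z`. -/
def essProjTails (μ₀ : Measure (X 0)) (A : Set (Z × ∀ i, X i)) :
    Set (Z × ∀ i : Fin n, X i.succ) :=
  {p | p.2 ∈ essProj μ₀ (splitHead A p.1)}

/-- The majorant for `A` built by interpolating between a majorant `g₁` for the slices and a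
majorant `g₂` for the essential projections. It is infinite over the `z` for which the essential
projection, hence `A_z`, is null. -/
noncomputable def consMajorant (μ₀ : Measure (X 0)) (ν : Measure (∀ i : Fin n, X i.succ))
    (A : Set (Z × ∀ i, X i)) (g₁ : (Z × X 0) × (∀ i : Fin n, X i.succ) → ℝ≥0∞)
    (g₂ : Z × (∀ i : Fin n, X i.succ) → ℝ≥0∞) (p : Z × ∀ i, X i) : ℝ≥0∞ :=
  if ν (essProj μ₀ (splitHead A p.1)) = 0 then ∞ else
    interpBound (sliceExponent μ₀ ν (splitHead A p.1) (p.2 0)) (g₁ ((p.1, p.2 0), tail p.2))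
      (g₂ (p.1, tail p.2))

lemma finCons_eq_piFinSuccAbove_symm :
    (fun p : X 0 × (∀ i : Fin n, X i.succ) => (cons p.1 p.2 : ∀ i, X i)) =
      (MeasurableEquiv.piFinSuccAbove X 0).symm :=
  funext fun p => (Fin.insertNth_zero p.1 p.2).symm

lemma measurable_finCons :
    Measurable fun p : X 0 × (∀ i : Fin n, X i.succ) => (cons p.1 p.2 : ∀ i, X i) := by
  rw [finCons_eq_piFinSuccAbove_symm]
  exact (MeasurableEquiv.piFinSuccAbove X 0).symm.measurable

lemma measurePreserving_finCons (μ : ∀ i, Measure (X i)) [∀ i, SigmaFinite (μ i)] :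
    MeasurePreserving (fun p : X 0 × (∀ i : Fin n, X i.succ) => (cons p.1 p.2 : ∀ i, X i))
      ((μ 0).prod (Measure.pi fun i : Fin n => μ i.succ)) (Measure.pi μ) := by
  rw [finCons_eq_piFinSuccAbove_symm]
  exact (measurePreserving_piFinSuccAbove μ 0).symm

variable [MeasurableSpace Z] {A : Set (Z × ∀ i, X i)}

lemma measurableSet_headSlices (hA : MeasurableSet A) : MeasurableSet (headSlices A) := by
  have hcons : Measurable fun p : (Z × X 0) × (∀ i : Fin n, X i.succ) =>
      (p.1.1, (cons p.1.2 p.2 : ∀ i, X i)) :=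
    (measurable_fst.comp measurable_fst).prodMk (measurable_finCons.comp
      ((measurable_snd.comp measurable_fst).prodMk measurable_snd))
  exact hcons hA

lemma measurableSet_splitHead (hA : MeasurableSet A) (z : Z) : MeasurableSet (splitHead A z) :=
  (measurable_const.prodMk measurable_finCons) hA

lemma measurableSet_essProjTails (μ₀ : Measure (X 0)) [SFinite μ₀] (hA : MeasurableSet A) :
    MeasurableSet (essProjTails μ₀ A) := by
  have hswap : Measurable fun p : X 0 × (Z × ∀ i : Fin n, X i.succ) => ((p.2.1, p.1), p.2.2) :=
    by fun_prop
  exact measurableSet_essProj (hswap (measurableSet_headSlices hA))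

lemma pi_preimage_eq_prod_splitHead (μ : ∀ i, Measure (X i)) [∀ i, SigmaFinite (μ i)]
    (hA : MeasurableSet A) (z : Z) :
    Measure.pi μ (Prod.mk z ⁻¹' A) =
      (μ 0).prod (Measure.pi fun i : Fin n => μ i.succ) (splitHead A z) :=
  ((measurePreserving_finCons μ).measure_preimage
    (measurable_prodMk_left hA).nullMeasurableSet).symm

lemma lintegral_pi_eq_lintegral_lintegral_cons (μ : ∀ i, Measure (X i)) [∀ i, SigmaFinite (μ i)]
    {f : (∀ i, X i) → ℝ≥0∞} (hf : Measurable f) :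
    ∫⁻ x, f x ∂Measure.pi μ =
      ∫⁻ a, ∫⁻ y, f (cons a y) ∂(Measure.pi fun i : Fin n => μ i.succ) ∂μ 0 := by
  rw [← (measurePreserving_finCons μ).lintegral_comp hf]
  exact lintegral_prod _ (hf.comp measurable_finCons).aemeasurable

lemma measurable_sliceExponent_splitHead (μ₀ : Measure (X 0)) [SFinite μ₀]
    (ν : Measure (∀ i : Fin n, X i.succ)) [SFinite ν] (hA : MeasurableSet A) :
    Measurable fun q : Z × X 0 => sliceExponent μ₀ ν (splitHead A q.1) q.2 := by
  have hslice : Measurable fun q : Z × X 0 => ν (Prod.mk q.2 ⁻¹' splitHead A q.1) :=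
    measurable_measure_prodMk_left (measurableSet_headSlices hA)
  have hproj : Measurable fun q : Z × X 0 => ν (essProj μ₀ (splitHead A q.1)) :=
    (measurable_measure_prodMk_left (measurableSet_essProjTails μ₀ hA)).comp measurable_fst
  exact measurable_interpExponent.comp (hslice.div hproj).ennreal_toReal

lemma measurable_consMajorant (μ₀ : Measure (X 0)) [SFinite μ₀]
    (ν : Measure (∀ i : Fin n, X i.succ)) [SFinite ν] (hA : MeasurableSet A)
    {g₁ : (Z × X 0) × (∀ i : Fin n, X i.succ) → ℝ≥0∞} {g₂ : Z × (∀ i : Fin n, X i.succ) → ℝ≥0∞}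
    (hg₁ : Measurable g₁) (hg₂ : Measurable g₂) : Measurable (consMajorant μ₀ ν A g₁ g₂) := by
  have hhead : Measurable fun p : Z × ∀ i, X i => (p.1, p.2 0) := by fun_prop
  have htail : Measurable fun p : Z × ∀ i, X i => tail p.2 :=
    measurable_pi_iff.2 fun i => (measurable_pi_apply i.succ).comp measurable_snd
  have hexp := (measurable_sliceExponent_splitHead μ₀ ν hA).comp hhead
  have hproj : Measurable fun p : Z × ∀ i, X i => ν (essProj μ₀ (splitHead A p.1)) :=
    (measurable_measure_prodMk_left (measurableSet_essProjTails μ₀ hA)).comp measurable_fst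
  exact Measurable.ite (hproj (measurableSet_singleton 0)) measurable_const
    (measurable_interpBound hexp (hg₁.comp (hhead.prodMk htail))
      (hg₂.comp (measurable_fst.prodMk htail)))

lemma expSqConvexDist_le_consMajorant (μ₀ : Measure (X 0)) (ν : Measure (∀ i : Fin n, X i.succ))
    {g₁ : (Z × X 0) × (∀ i : Fin n, X i.succ) → ℝ≥0∞} {g₂ : Z × (∀ i : Fin n, X i.succ) → ℝ≥0∞}
    (h₁ : IsExpMajorant ν (headSlices A) g₁) (h₂ : IsExpMajorant ν (essProjTails μ₀ A) g₂)
    (z : Z) (x : ∀ i, X i) :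
    expSqConvexDist x (Prod.mk z ⁻¹' A) ≤ consMajorant μ₀ ν A g₁ g₂ (z, x) := by
  by_cases hnull : ν (essProj μ₀ (splitHead A z)) = 0
  · simp [consMajorant, hnull]
  · have hproj : essProj μ₀ (splitHead A z) ⊆ tail '' (Prod.mk z ⁻¹' A) := fun y hy => by
      obtain ⟨p, hp, rfl⟩ := essProj_subset_image_snd _ hy
      exact ⟨cons p.1 p.2, hp, Fin.tail_cons ..⟩
    have hl := sliceExponent_mem_Icc (μ := μ₀) (ν := ν) (splitHead A z) (x 0)
    rw [consMajorant, if_neg hnull]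
    exact (expSqConvexDist_le_interpBound x (nonempty_of_measure_ne_zero hnull) hproj hl
      nonempty_slice_of_sliceExponent_ne_zero).trans
        (interpBound_mono hl (h₁.le (z, x 0) (tail x)) (h₂.le z (tail x)))

lemma isExpMajorant_consMajorant (μ : ∀ i, Measure (X i)) [∀ i, IsProbabilityMeasure (μ i)]
    (hA : MeasurableSet A) {g₁ : (Z × X 0) × (∀ i : Fin n, X i.succ) → ℝ≥0∞}
    {g₂ : Z × (∀ i : Fin n, X i.succ) → ℝ≥0∞}
    (h₁ : IsExpMajorant (Measure.pi fun i : Fin n => μ i.succ) (headSlices A) g₁)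
    (h₂ : IsExpMajorant (Measure.pi fun i : Fin n => μ i.succ) (essProjTails (μ 0) A) g₂) :
    IsExpMajorant (Measure.pi μ) A
      (consMajorant (μ 0) (Measure.pi fun i : Fin n => μ i.succ) A g₁ g₂) where
  measurable := measurable_consMajorant _ _ hA h₁.measurable h₂.measurable
  le := expSqConvexDist_le_consMajorant _ _ h₁ h₂
  measure_mul_lintegral_le_one z := by
    set ν := Measure.pi fun i : Fin n => μ i.succ
    have hS := measurableSet_splitHead hA z
    rw [pi_preimage_eq_prod_splitHead μ hA]
    by_cases hnull : ν (essProj (μ 0) (splitHead A z)) = 0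
    · simp [prod_eq_zero_of_measure_essProj_eq_zero hS hnull, ν]
    · have hmeas : Measurable fun x => consMajorant (μ 0) ν A g₁ g₂ (z, x) :=
        (measurable_consMajorant _ _ hA h₁.measurable h₂.measurable).comp measurable_prodMk_left
      rw [lintegral_pi_eq_lintegral_lintegral_cons μ hmeas]
      simp only [consMajorant, if_neg hnull, Fin.cons_zero, Fin.tail_cons]
      exact prod_mul_lintegral_interpBound_le_one (g₁ := fun a y => g₁ ((z, a), y))
        (g₂ := fun y => g₂ (z, y)) hS
        (fun a => (h₁.measurable.comp measurable_prodMk_left).aemeasurable)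
        (h₂.measurable.comp measurable_prodMk_left).aemeasurable
        (fun a => h₁.measure_mul_lintegral_le_one (z, a))
        (h₂.measure_mul_lintegral_le_one z) hnull

theorem exists_isExpMajorant {n : ℕ} {X : Fin n → Type u} [∀ i, MeasurableSpace (X i)]
    (μ : ∀ i, Measure (X i)) [∀ i, IsProbabilityMeasure (μ i)] {Z : Type u} [MeasurableSpace Z]
    {A : Set (Z × ∀ i, X i)} (hA : MeasurableSet A) : ∃ g, IsExpMajorant (Measure.pi μ) A g := by
  induction n generalizing Z with
  | zero => exact ⟨1, isExpMajorant_one _ A⟩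
  | succ n ih =>
    obtain ⟨g₁, h₁⟩ := ih (fun i => μ i.succ) (measurableSet_headSlices hA)
    obtain ⟨g₂, h₂⟩ := ih (fun i => μ i.succ) (measurableSet_essProjTails (μ 0) hA)
    exact ⟨_, isExpMajorant_consMajorant μ hA h₁ h₂⟩

theorem exists_measurable_ge_expSqConvexDist {n : ℕ} {X : Fin n → Type*}
    [∀ i, MeasurableSpace (X i)] (μ : ∀ i, Measure (X i)) [∀ i, IsProbabilityMeasure (μ i)]
    {A : Set (∀ i, X i)} (hA : MeasurableSet A) :
    ∃ g : (∀ i, X i) → ℝ≥0∞, Measurable g ∧ (∀ x, expSqConvexDist x A ≤ g x) ∧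
      Measure.pi μ A * ∫⁻ x, g x ∂Measure.pi μ ≤ 1 := by
  obtain ⟨g, hg⟩ := exists_isExpMajorant μ (Z := PUnit) (A := Prod.snd ⁻¹' A) (measurable_snd hA)
  exact ⟨fun x => g (PUnit.unit, x), hg.measurable.comp measurable_prodMk_left, hg.le PUnit.unit,
    hg.measure_mul_lintegral_le_one PUnit.unit⟩

end Majorants

section Consequences

variable {Ω : Type*} [MeasurableSpace Ω] {ν : Measure Ω} {f : Ω → ℝ} {g : Ω → ℝ≥0∞} {c : ℝ≥0∞}

lemma toReal_mul_integral_le_one (hf : 0 ≤ f) (hfg : ∀ x, ENNReal.ofReal (f x) ≤ g x)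
    (hg : c * ∫⁻ x, g x ∂ν ≤ 1) : c.toReal * ∫ x, f x ∂ν ≤ 1 := by
  have hle : ENNReal.ofReal (∫ x, f x ∂ν) ≤ ∫⁻ x, g x ∂ν :=
    calc ENNReal.ofReal (∫ x, f x ∂ν) = ‖∫ x, f x ∂ν‖ₑ :=
          (Real.enorm_of_nonneg (integral_nonneg hf)).symm
      _ ≤ ∫⁻ x, ‖f x‖ₑ ∂ν := enorm_integral_le_lintegral_enorm f
      _ ≤ ∫⁻ x, g x ∂ν := lintegral_mono fun x => (Real.enorm_of_nonneg (hf x)).trans_le (hfg x)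
  calc c.toReal * ∫ x, f x ∂ν = (c * ENNReal.ofReal (∫ x, f x ∂ν)).toReal := by
        rw [ENNReal.toReal_mul, ENNReal.toReal_ofReal (integral_nonneg hf)]
    _ ≤ 1 := ENNReal.toReal_le_of_le_ofReal zero_le_one <| by
        rw [ENNReal.ofReal_one]
        exact (by gcongr : _ ≤ c * ∫⁻ x, g x ∂ν).trans hg

lemma toReal_mul_measure_ge_le_inv (hg_meas : Measurable g)
    (hfg : ∀ x, ENNReal.ofReal (f x) ≤ g x) (hg : c * ∫⁻ x, g x ∂ν ≤ 1) {K : ℝ} (hK : 0 < K) :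
    c.toReal * (ν {x | K ≤ f x}).toReal ≤ K⁻¹ := by
  have hmarkov : ENNReal.ofReal K * ν {x | K ≤ f x} ≤ ∫⁻ x, g x ∂ν := by
    refine le_trans ?_ (mul_meas_ge_le_lintegral hg_meas (ENNReal.ofReal K))
    refine mul_le_mul_right (measure_mono fun x hx => ?_) _
    exact (ENNReal.ofReal_le_ofReal hx).trans (hfg x)
  have hbound : c * ν {x | K ≤ f x} ≤ ENNReal.ofReal K⁻¹ := by
    rw [ENNReal.ofReal_inv_of_pos hK, ENNReal.le_inv_iff_mul_le, mul_assoc, mul_comm (ν _)]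
    exact (by gcongr : _ ≤ c * ∫⁻ x, g x ∂ν).trans hg
  rw [← ENNReal.toReal_mul]
  exact ENNReal.toReal_le_of_le_ofReal (inv_pos.2 hK).le hbound

end Consequences

theorem stmt18_general {n : ℕ} {X : Fin n → Type*} [∀ i, MeasurableSpace (X i)]
    (μ : ∀ i, Measure (X i)) [∀ i, IsProbabilityMeasure (μ i)] {A : Set (∀ i, X i)}
    (hA : MeasurableSet A) :
    (Measure.pi μ A).toReal * ∫ x, Real.exp (convexDist x A ^ 2 / 4) ∂(Measure.pi μ) ≤ 1 ∧
    ∀ t : ℝ, 0 ≤ t →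
      (Measure.pi μ A).toReal * (Measure.pi μ {x | t ≤ convexDist x A}).toReal ≤
        Real.exp (-t ^ 2 / 4) := by
  obtain ⟨g, hg_meas, hDg, hg⟩ := exists_measurable_ge_expSqConvexDist μ hA
  refine ⟨toReal_mul_integral_le_one (fun x => (Real.exp_pos _).le) hDg hg, fun t ht => ?_⟩
  have hevent : {x | t ≤ convexDist x A} =
      {x | Real.exp (t ^ 2 / 4) ≤ Real.exp (convexDist x A ^ 2 / 4)} := by
    ext x
    simp [div_le_div_iff_of_pos_right, pow_le_pow_iff_left₀ ht (convexDist_nonneg x)]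
  rw [hevent, neg_div, Real.exp_neg]
  exact toReal_mul_measure_ge_le_inv hg_meas hDg hg (Real.exp_pos _)

/-- Talagrand's convex hull concentration inequality: for `X` with independent coordinates
(law a product measure `ℚ = ⊗ μᵢ`) and measurable `A ⊆ 𝒳ⁿ`,
`ℙ{X ∈ A} · 𝔼 exp(D(X,A)²/4) ≤ 1`, and consequently
`ℙ{X ∈ A} · ℙ{D(X,A) ≥ t} ≤ exp(-t²/4)` for all `t ≥ 0`. -/
theorem stmt18 {X : Type*} [MeasurableSpace X] (n : ℕ)
    (μ : Fin n → Measure X) [∀ i, IsProbabilityMeasure (μ i)]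
    (A : Set (Fin n → X)) (hA : MeasurableSet A) :
    (Measure.pi μ A).toReal * ∫ x, Real.exp (talD x A ^ 2 / 4) ∂(Measure.pi μ) ≤ 1 ∧
    ∀ t : ℝ, 0 ≤ t →
      (Measure.pi μ A).toReal * (Measure.pi μ {x | t ≤ talD x A}).toReal ≤
        Real.exp (-t ^ 2 / 4) := by
  simpa only [talD_eq_convexDist] using stmt18_general μ hA
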